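/- Let I ∈ Ins(Ω,H,K) be a trash-and-prepare instrument, i.e. there exist a probability distribution (p_x)_{x∈Ω} and states ξ_x ∈ S(K) such that I_x(ρ) = tr[ρ] p_x ξ_x for all ρ and x ∈ Ω. Then I is compatible with every instrument J ∈ Ins(Λ,H,V); explicitly, G_(x,y)(ρ) := p_x ξ_x ⊗ J_y(ρ) defines a joint instrument for I and J. -/

import Mathlib

open scoped Kronecker ComplexOrder
open Matrix

noncomputable section

/-- Linear maps between matrix algebras, representing super-operators
`L(H) → L(K)` for finite-dimensional Hilbert spaces with index types `dH`, `dK`. -/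
abbrev MatMap (dH dK : Type) : Type := Matrix dH dH ℂ →ₗ[ℂ] Matrix dK dK ℂ

variable {Ω Λ dH dK dV dA dA' : Type}

/-- The Choi matrix of a super-operator. -/
def choiMatrix [DecidableEq dH] (Φ : MatMap dH dK) : Matrix (dH × dK) (dH × dK) ℂ :=
  fun p q => Φ (Matrix.single p.1 q.1 1) p.2 q.2

/-- Complete positivity of a super-operator (positivity of its Choi matrix). -/
def IsCP [Fintype dH] [DecidableEq dH] [Fintype dK] (Φ : MatMap dH dK) : Prop :=
  (choiMatrix Φ).PosSemidef

/-- A quantum state: a positive semidefinite matrix of unit trace. -/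
def IsState [Fintype dH] (ρ : Matrix dH dH ℂ) : Prop := ρ.PosSemidef ∧ ρ.trace = 1

/-- Trace-nonincreasing super-operator. -/
def IsTNI [Fintype dH] [Fintype dK] (Φ : MatMap dH dK) : Prop :=
  ∀ ρ : Matrix dH dH ℂ, ρ.PosSemidef → (Φ ρ).trace ≤ ρ.trace

/-- Trace-preserving super-operator. -/
def IsTP [Fintype dH] [Fintype dK] (Φ : MatMap dH dK) : Prop :=
  ∀ ρ : Matrix dH dH ℂ, (Φ ρ).trace = ρ.trace

/-- A quantum instrument with outcome set `Ω` from system `dH` to system `dK`: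
a family of completely positive trace-nonincreasing maps summing to a channel. -/
structure Instrument (Ω dH dK : Type) [Fintype Ω] [Fintype dH] [DecidableEq dH]
    [Fintype dK] : Type where
  op : Ω → MatMap dH dK
  cp : ∀ x, IsCP (op x)
  tni : ∀ x, IsTNI (op x)
  tp : IsTP (∑ x, op x)

/-- A quantum channel: a completely positive trace-preserving super-operator. -/
structure Channel (dH dK : Type) [Fintype dH] [DecidableEq dH] [Fintype dK] : Type where
  map : MatMap dH dK
  cp : IsCP map
  tp : IsTP map

/-- A POVM with outcome set `Ω` on system `d`. -/
structure POVM (Ω d : Type) [Fintype Ω] [Fintype d] [DecidableEq d] : Type where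
  elem : Ω → Matrix d d ℂ
  pos : ∀ x, (elem x).PosSemidef
  sum_eq : ∑ x, elem x = 1

/-- The effect (induced POVM element) of an operation `Φ`:
the unique matrix `A` with `tr[A ρ] = tr[Φ ρ]` for all `ρ`. -/
def dualId [Fintype dH] [DecidableEq dH] [Fintype dK] (Φ : MatMap dH dK) :
    Matrix dH dH ℂ :=
  fun i j => (Φ (Matrix.single j i 1)).trace

/-- Partial trace over the first tensor factor. -/
def ptraceL [Fintype dA] (M : Matrix (dA × dK) (dA × dK) ℂ) : Matrix dK dK ℂ :=
  fun i j => ∑ a, M (a, i) (a, j)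

/-- Partial trace over the second tensor factor. -/
def ptraceR [Fintype dV] (M : Matrix (dK × dV) (dK × dV) ℂ) : Matrix dK dK ℂ :=
  fun i j => ∑ b, M (i, b) (j, b)

/-- Compatibility of two instruments: existence of a joint instrument whose
partial-trace marginals (summed over the other outcome) reproduce both instruments
on all states. -/
def InsCompatible [Fintype Ω] [Fintype Λ] [Fintype dH] [DecidableEq dH] [Fintype dK]
    [Fintype dV] (I : Instrument Ω dH dK) (J : Instrument Λ dH dV) : Prop :=
  ∃ G : Instrument (Ω × Λ) dH (dK × dV),
    (∀ y, ∀ ρ : Matrix dH dH ℂ, IsState ρ → ∑ x, ptraceL (G.op (x, y) ρ) = J.op y ρ) ∧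
    (∀ x, ∀ ρ : Matrix dH dH ℂ, IsState ρ → ∑ y, ptraceR (G.op (x, y) ρ) = I.op x ρ)

/-- Compatibility of an instrument and a channel (a one-outcome instrument). -/
def InsChCompatible [Fintype Ω] [Fintype dH] [DecidableEq dH] [Fintype dK] [Fintype dV]
    (I : Instrument Ω dH dK) (Ψ : Channel dH dV) : Prop :=
  ∃ G : Instrument Ω dH (dK × dV),
    (∀ ρ : Matrix dH dH ℂ, IsState ρ → ∑ x, ptraceL (G.op x ρ) = Ψ.map ρ) ∧
    (∀ x, ∀ ρ : Matrix dH dH ℂ, IsState ρ → ptraceR (G.op x ρ) = I.op x ρ)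

/-- Compatibility of two channels. -/
def ChCompatible [Fintype dH] [DecidableEq dH] [Fintype dK] [Fintype dV]
    (Φ : Channel dH dK) (Ψ : Channel dH dV) : Prop :=
  ∃ Γ : Channel dH (dK × dV),
    (∀ ρ : Matrix dH dH ℂ, IsState ρ → ptraceL (Γ.map ρ) = Ψ.map ρ) ∧
    (∀ ρ : Matrix dH dH ℂ, IsState ρ → ptraceR (Γ.map ρ) = Φ.map ρ)

/-- Compatibility of a POVM and an instrument: existence of a joint instrument `G`
with `∑ x, G.op (x, y) = J.op y` and whose induced POVM has the POVM `A` as a margin. -/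
def POVMInsCompatible [Fintype Ω] [Fintype Λ] [Fintype dH] [DecidableEq dH] [Fintype dK]
    (A : POVM Ω dH) (J : Instrument Λ dH dK) : Prop :=
  ∃ G : Instrument (Ω × Λ) dH dK,
    (∀ y, ∑ x, G.op (x, y) = J.op y) ∧
    (∀ x, ∑ y, dualId (G.op (x, y)) = A.elem x)

/-- Compatibility (joint measurability) of two POVMs. -/
def POVMCompatible [Fintype Ω] [Fintype Λ] [Fintype dH] [DecidableEq dH]
    (A : POVM Ω dH) (B : POVM Λ dH) : Prop :=
  ∃ G : POVM (Ω × Λ) dH,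
    (∀ y, ∑ x, G.elem (x, y) = B.elem y) ∧
    (∀ x, ∑ y, G.elem (x, y) = A.elem x)

/-- Compatibility of a POVM and a channel: existence of an instrument implementing both. -/
def POVMChCompatible [Fintype Ω] [Fintype dH] [DecidableEq dH] [Fintype dK]
    (A : POVM Ω dH) (Ψ : Channel dH dK) : Prop :=
  ∃ G : Instrument Ω dH dK,
    (∑ x, G.op x) = Ψ.map ∧ ∀ x, dualId (G.op x) = A.elem x

/-- Instrument postprocessing: `I ⪯ J` if `I_x = ∑ y, R^(y)_x ∘ J_y` for
a family of instruments `R^(y)`. -/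
def Postprocessed [Fintype Ω] [Fintype Λ] [Fintype dH] [DecidableEq dH] [Fintype dK]
    [Fintype dV] [DecidableEq dV] (I : Instrument Ω dH dK) (J : Instrument Λ dH dV) : Prop :=
  ∃ R : Λ → Instrument Ω dV dK, ∀ x, I.op x = ∑ y, (R y).op x ∘ₗ J.op y

/-- An instrument `I` does not disturb an instrument `J`: `J_y ∘ Φ^I = J_y`. -/
def NonDisturbs [Fintype Ω] [Fintype Λ] [Fintype dH] [DecidableEq dH] [Fintype dV]
    (I : Instrument Ω dH dH) (J : Instrument Λ dH dV) : Prop :=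
  ∀ y, J.op y ∘ₗ (∑ x, I.op x) = J.op y

/-- An instrument `I` does not disturb a channel `Ψ`: `Ψ ∘ Φ^I = Ψ`. -/
def InsNonDisturbsCh [Fintype Ω] [Fintype dH] [DecidableEq dH] [Fintype dV]
    (I : Instrument Ω dH dH) (Ψ : Channel dH dV) : Prop :=
  Ψ.map ∘ₗ (∑ x, I.op x) = Ψ.map

/-- An instrument `I` does not disturb a POVM `A`:
the statistics of `A` are unchanged by the channel induced by `I`. -/
def InsNonDisturbsPOVM [Fintype Ω] [Fintype Λ] [Fintype dH] [DecidableEq dH]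
    (I : Instrument Ω dH dH) (A : POVM Λ dH) : Prop :=
  ∀ y, ∀ ρ : Matrix dH dH ℂ,
    (A.elem y * ((∑ x, I.op x) ρ)).trace = (A.elem y * ρ).trace

/-- A POVM `A` does not disturb an instrument `J`: some instrument measuring `A`
does not disturb `J`. -/
def POVMNonDisturbs [Fintype Ω] [Fintype Λ] [Fintype dH] [DecidableEq dH] [Fintype dV]
    (A : POVM Ω dH) (J : Instrument Λ dH dV) : Prop :=
  ∃ I : Instrument Ω dH dH, (∀ x, dualId (I.op x) = A.elem x) ∧ NonDisturbs I J

/-- A POVM `A` does not disturb a channel `Ψ`. -/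
def POVMNonDisturbsCh [Fintype Ω] [Fintype dH] [DecidableEq dH] [Fintype dV]
    (A : POVM Ω dH) (Ψ : Channel dH dV) : Prop :=
  ∃ I : Instrument Ω dH dH, (∀ x, dualId (I.op x) = A.elem x) ∧ InsNonDisturbsCh I Ψ

/-- A POVM `A` does not disturb a POVM `B`. -/
def POVMNonDisturbsPOVM [Fintype Ω] [Fintype Λ] [Fintype dH] [DecidableEq dH]
    (A : POVM Ω dH) (B : POVM Λ dH) : Prop :=
  ∃ I : Instrument Ω dH dH, (∀ x, dualId (I.op x) = A.elem x) ∧ InsNonDisturbsPOVM I B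

/-- A sharp (projection-valued) POVM. -/
def IsSharp [Fintype Ω] [Fintype dH] [DecidableEq dH] (A : POVM Ω dH) : Prop :=
  ∀ x, A.elem x * A.elem x = A.elem x

/-- `(H_A, W, E)` is a dilation of the instrument `I`:
`W` is an isometry `H → H_A ⊗ K` and
`I_x(ρ) = Tr_{H_A}[W ρ W* (E(x) ⊗ 1_K)]` on all states. -/
def IsDilation [Fintype Ω] [Fintype dH] [DecidableEq dH] [Fintype dK] [DecidableEq dK]
    [Fintype dA] [DecidableEq dA] (I : Instrument Ω dH dK)
    (W : Matrix (dA × dK) dH ℂ) (E : POVM Ω dA) : Prop :=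
  Wᴴ * W = 1 ∧
  ∀ x, ∀ ρ : Matrix dH dH ℂ, IsState ρ →
    I.op x ρ = ptraceL (W * ρ * Wᴴ * (E.elem x ⊗ₖ (1 : Matrix dK dK ℂ)))

/-- Minimality of a Stinespring isometry `W : H → H_A ⊗ K`:
the span of `{(1 ⊗ B) W φ}` is everything. -/
def IsMinimalW [Fintype dH] [Fintype dK] [DecidableEq dK] [Fintype dA] [DecidableEq dA]
    (W : Matrix (dA × dK) dH ℂ) : Prop :=
  Submodule.span ℂ {v : (dA × dK) → ℂ |
    ∃ (B : Matrix dK dK ℂ) (φ : dH → ℂ),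
      v = ((1 : Matrix dA dA ℂ) ⊗ₖ B) *ᵥ (W *ᵥ φ)} = ⊤

/-- The positive semidefinite square root of a positive semidefinite matrix
(the old Mathlib definition, since removed from Mathlib). -/
def Matrix.PosSemidef.sqrt {n 𝕜 : Type*} [Fintype n] [RCLike 𝕜] [DecidableEq n]
    {A : Matrix n n 𝕜} (hA : A.PosSemidef) : Matrix n n 𝕜 :=
  hA.1.eigenvectorUnitary.1 * Matrix.diagonal ((↑) ∘ Real.sqrt ∘ hA.1.eigenvalues) *
    (star hA.1.eigenvectorUnitary : Matrix n n 𝕜)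

/-- `IC` is the complementary instrument of the instrument dilated by `(W, E)`:
`IC_x(ρ) = Tr_K[(√E(x) ⊗ 1) W ρ W* (√E(x) ⊗ 1)]`. -/
def IsComplementaryOf [Fintype Ω] [Fintype dH] [DecidableEq dH] [Fintype dK]
    [DecidableEq dK] [Fintype dA] [DecidableEq dA] (W : Matrix (dA × dK) dH ℂ) (E : POVM Ω dA)
    (IC : Instrument Ω dH dA) : Prop :=
  ∀ x, ∀ ρ : Matrix dH dH ℂ,
    IC.op x ρ =
      ptraceR (((E.pos x).sqrt ⊗ₖ (1 : Matrix dK dK ℂ)) * (W * ρ * Wᴴ) *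
        ((E.pos x).sqrt ⊗ₖ (1 : Matrix dK dK ℂ)))

/-- A measure-and-prepare instrument: `I_x(ρ) = tr[A(x) ρ] ξ_x`. -/
def IsMeasureAndPrepare [Fintype Ω] [Fintype dH] [DecidableEq dH] [Fintype dK]
    [DecidableEq dK] (I : Instrument Ω dH dK) : Prop :=
  ∃ (A : POVM Ω dH) (ξ : Ω → Matrix dK dK ℂ),
    (∀ x, IsState (ξ x)) ∧
    ∀ x, ∀ ρ : Matrix dH dH ℂ, I.op x ρ = ((A.elem x * ρ).trace) • ξ x

/-- A pure state: a state which is a (rank-one) projection. -/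
def IsPureState [Fintype dK] (ρ : Matrix dK dK ℂ) : Prop :=
  IsState ρ ∧ ρ * ρ = ρ

/-- A rank-1 POVM: every effect has rank at most one. -/
def IsRankOnePOVM [Fintype Ω] [Fintype dH] [DecidableEq dH] (A : POVM Ω dH) : Prop :=
  ∀ x, (A.elem x).rank ≤ 1

/-- POVM postprocessing: `B(y) = ∑ x, ν x y • A(x)` for a stochastic matrix `ν`. -/
def POVMPostprocessed [Fintype Ω] [Fintype Λ] [Fintype dH] [DecidableEq dH]
    (B : POVM Λ dH) (A : POVM Ω dH) : Prop :=
  ∃ ν : Ω → Λ → ℝ, (∀ x y, 0 ≤ ν x y) ∧ (∀ x, ∑ y, ν x y = 1) ∧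
    ∀ y, B.elem y = ∑ x, (ν x y : ℂ) • A.elem x

/-- A measure-and-prepare instrument preparing pure states. -/
def IsMeasureAndPreparePure [Fintype Ω] [Fintype dH] [DecidableEq dH] [Fintype dK]
    [DecidableEq dK] (I : Instrument Ω dH dK) : Prop :=
  ∃ (A : POVM Ω dH) (ξ : Ω → Matrix dK dK ℂ),
    (∀ x, IsPureState (ξ x)) ∧
    ∀ x, ∀ ρ : Matrix dH dH ℂ, I.op x ρ = ((A.elem x * ρ).trace) • ξ x

/-!
Absorb the weights into the states: `σ x = p x • ξ x` are positive with total trace one. Choi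
matrices and traces are multiplicative under `ρ ↦ σ x ⊗ₖ J_y ρ`, so these maps form an instrument.
Tracing out the first factor leaves `∑ x, tr (σ x) = 1` times `J_y ρ`; tracing out the second leaves
`∑ y, tr (J_y ρ) = tr ρ` times `σ x`.
-/

theorem ptraceL_kronecker [Fintype dA] (A : Matrix dA dA ℂ) (B : Matrix dK dK ℂ) :
    ptraceL (A ⊗ₖ B) = A.trace • B := by
  ext i j
  simp [ptraceL, Matrix.trace, Finset.sum_mul]

theorem ptraceR_kronecker [Fintype dV] (A : Matrix dK dK ℂ) (B : Matrix dV dV ℂ) :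
    ptraceR (A ⊗ₖ B) = B.trace • A := by
  ext i j
  simp [ptraceR, Matrix.trace, ← Finset.mul_sum, mul_comm]

/-- The super-operator `ρ ↦ σ ⊗ Φ ρ`, which runs `Φ` and places its output next to the fixed
matrix `σ`. -/
def MatMap.kroneckerLeft (σ : Matrix dK dK ℂ) (Φ : MatMap dH dV) : MatMap dH (dK × dV) :=
  kroneckerBilinear (R := ℂ) σ ∘ₗ Φ

section KroneckerLeft

variable (σ : Matrix dK dK ℂ) (Φ : MatMap dH dV)

theorem MatMap.kroneckerLeft_apply (ρ : Matrix dH dH ℂ) : Φ.kroneckerLeft σ ρ = σ ⊗ₖ Φ ρ :=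
  rfl

theorem MatMap.trace_kroneckerLeft [Fintype dK] [Fintype dV] (ρ : Matrix dH dH ℂ) :
    (Φ.kroneckerLeft σ ρ).trace = σ.trace * (Φ ρ).trace :=
  trace_kronecker σ (Φ ρ)

theorem choiMatrix_kroneckerLeft [DecidableEq dH] :
    choiMatrix (Φ.kroneckerLeft σ) =
      (σ ⊗ₖ choiMatrix Φ).submatrix (fun q => (q.2.1, q.1, q.2.2))
        (fun q => (q.2.1, q.1, q.2.2)) :=
  rfl

variable {σ Φ}

theorem IsCP.kroneckerLeft [Fintype dH] [DecidableEq dH] [Fintype dK] [Fintype dV]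
    (hΦ : IsCP Φ) (hσ : σ.PosSemidef) : IsCP (Φ.kroneckerLeft σ) := by
  rw [IsCP, choiMatrix_kroneckerLeft]
  exact (hσ.kronecker hΦ).submatrix _

theorem IsTNI.kroneckerLeft [Fintype dH] [Fintype dK] [Fintype dV]
    (hΦ : IsTNI Φ) (hσ₀ : 0 ≤ σ.trace) (hσ₁ : σ.trace ≤ 1) : IsTNI (Φ.kroneckerLeft σ) := by
  intro ρ hρ
  calc (Φ.kroneckerLeft σ ρ).trace = σ.trace * (Φ ρ).trace := Φ.trace_kroneckerLeft σ ρ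
    _ ≤ σ.trace * ρ.trace := mul_le_mul_of_nonneg_left (hΦ ρ hρ) hσ₀
    _ ≤ ρ.trace := mul_le_of_le_one_left hρ.trace_nonneg hσ₁

end KroneckerLeft

/-- An ensemble: positive semidefinite matrices of total trace one. The probability of `x` is
encoded as the trace of `σ x`, so that a state `ξ x` with probability `p x` enters as
`p x • ξ x`. -/
def IsEnsemble [Fintype Ω] [Fintype dK] (σ : Ω → Matrix dK dK ℂ) : Prop :=
  (∀ x, (σ x).PosSemidef) ∧ ∑ x, (σ x).trace = 1

section Ensemble

variable [Fintype Ω] [Fintype dK] {σ : Ω → Matrix dK dK ℂ}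

theorem IsEnsemble.trace_le_one (hσ : IsEnsemble σ) (x : Ω) : (σ x).trace ≤ 1 :=
  hσ.2 ▸ Finset.single_le_sum (fun i _ => (hσ.1 i).trace_nonneg) (Finset.mem_univ x)

theorem isEnsemble_smul_of_isState {p : Ω → ℝ} (hp₀ : ∀ x, 0 ≤ p x) (hp₁ : ∑ x, p x = 1)
    {ξ : Ω → Matrix dK dK ℂ} (hξ : ∀ x, IsState (ξ x)) :
    IsEnsemble fun x => (p x : ℂ) • ξ x := by
  refine ⟨fun x => (hξ x).1.smul (Complex.zero_le_real.mpr (hp₀ x)), ?_⟩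
  simp only [trace_smul, (hξ _).2, smul_eq_mul, mul_one]
  exact_mod_cast hp₁

end Ensemble

namespace Instrument

variable [Fintype Ω] [Fintype Λ] [Fintype dH] [DecidableEq dH] [Fintype dK] [Fintype dV]
  {σ : Ω → Matrix dK dK ℂ}

theorem sum_trace_op (J : Instrument Λ dH dV) (ρ : Matrix dH dH ℂ) :
    ∑ y, (J.op y ρ).trace = ρ.trace := by
  rw [← trace_sum, ← LinearMap.sum_apply, J.tp]

/-- The instrument `ρ ↦ σ x ⊗ J_y ρ` with outcomes `(x, y)`, which runs `J` and independently
prepares a member of the ensemble `σ`. -/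
def prepareAlongside (J : Instrument Λ dH dV) (hσ : IsEnsemble σ) :
    Instrument (Ω × Λ) dH (dK × dV) where
  op z := (J.op z.2).kroneckerLeft (σ z.1)
  cp z := (J.cp z.2).kroneckerLeft (hσ.1 z.1)
  tni z := (J.tni z.2).kroneckerLeft (hσ.1 z.1).trace_nonneg (hσ.trace_le_one z.1)
  tp ρ := by
    simp only [LinearMap.sum_apply, trace_sum, MatMap.trace_kroneckerLeft, Fintype.sum_prod_type,
      ← Finset.mul_sum, J.sum_trace_op, ← Finset.sum_mul, hσ.2, one_mul]

theorem prepareAlongside_op_apply (J : Instrument Λ dH dV) (hσ : IsEnsemble σ) (x : Ω) (y : Λ)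
    (ρ : Matrix dH dH ℂ) : (J.prepareAlongside hσ).op (x, y) ρ = σ x ⊗ₖ J.op y ρ :=
  (J.op y).kroneckerLeft_apply (σ x) ρ

theorem sum_ptraceL_prepareAlongside (J : Instrument Λ dH dV) (hσ : IsEnsemble σ) (y : Λ)
    (ρ : Matrix dH dH ℂ) :
    ∑ x, ptraceL ((J.prepareAlongside hσ).op (x, y) ρ) = J.op y ρ := by
  simp only [prepareAlongside_op_apply, ptraceL_kronecker, ← Finset.sum_smul, hσ.2, one_smul]

theorem sum_ptraceR_prepareAlongside (J : Instrument Λ dH dV) (hσ : IsEnsemble σ) (x : Ω)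
    (ρ : Matrix dH dH ℂ) :
    ∑ y, ptraceR ((J.prepareAlongside hσ).op (x, y) ρ) = ρ.trace • σ x := by
  simp only [prepareAlongside_op_apply, ptraceR_kronecker, ← Finset.sum_smul, J.sum_trace_op]

end Instrument

/-- A trash-and-prepare instrument `I_x(ρ) = tr[ρ] p_x ξ_x` is compatible
with every instrument `J`; explicitly `G_(x,y)(ρ) = p_x • (ξ_x ⊗ J_y(ρ))` defines a
joint instrument for `I` and `J`. -/
theorem trash_and_prepare_compatible_with_all
    [Fintype Ω] [Fintype Λ] [Fintype dH] [DecidableEq dH] [Fintype dK] [Fintype dV]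
    (I : Instrument Ω dH dK)
    (p : Ω → ℝ) (hp0 : ∀ x, 0 ≤ p x) (hp1 : ∑ x, p x = 1)
    (ξ : Ω → Matrix dK dK ℂ) (hξ : ∀ x, IsState (ξ x))
    (hI : ∀ x, ∀ ρ : Matrix dH dH ℂ, I.op x ρ = (ρ.trace * (p x : ℂ)) • ξ x)
    (J : Instrument Λ dH dV) :
    InsCompatible I J ∧
    ∃ G : Instrument (Ω × Λ) dH (dK × dV),
      (∀ x y, ∀ ρ : Matrix dH dH ℂ, G.op (x, y) ρ = (p x : ℂ) • (ξ x ⊗ₖ J.op y ρ)) ∧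
      (∀ y, ∀ ρ : Matrix dH dH ℂ, IsState ρ → ∑ x, ptraceL (G.op (x, y) ρ) = J.op y ρ) ∧
      (∀ x, ∀ ρ : Matrix dH dH ℂ, IsState ρ → ∑ y, ptraceR (G.op (x, y) ρ) = I.op x ρ) := by
  have hσ : IsEnsemble fun x => (p x : ℂ) • ξ x := isEnsemble_smul_of_isState hp0 hp1 hξ
  let G := J.prepareAlongside hσ
  have hG : ∀ x y ρ, G.op (x, y) ρ = (p x : ℂ) • (ξ x ⊗ₖ J.op y ρ) := fun x y ρ => by
    rw [J.prepareAlongside_op_apply hσ, smul_kronecker]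
  have hGJ : ∀ y ρ, IsState ρ → ∑ x, ptraceL (G.op (x, y) ρ) = J.op y ρ :=
    fun y ρ _ => J.sum_ptraceL_prepareAlongside hσ y ρ
  have hGI : ∀ x ρ, IsState ρ → ∑ y, ptraceR (G.op (x, y) ρ) = I.op x ρ := fun x ρ _ => by
    rw [J.sum_ptraceR_prepareAlongside hσ, hI, smul_smul]
  exact ⟨⟨G, hGJ, hGI⟩, G, hG, hGJ, hGI⟩
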